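/- Every compatible subset of the set Ψ(Q)_{≥−1} of almost positive real Schur roots of Q is linearly independent over ℚ; in particular, every compatible subset has at most |Q_0| elements. -/

import Mathlib

set_option autoImplicit false

noncomputable section

open scoped BigOperators

/-! Basic setup for representations of a quiver with vertex set `V`, arrow set `A`,
tail map `t` and head map `h`, over a field `K`. -/

variable (K : Type) [Field K]
variable {V A : Type} [Fintype V] [DecidableEq V] [Fintype A]

/-- The Euler form of the quiver `(V, A, t, h)`. -/
def eulerForm {R : Type} [CommRing R] (t h : A → V) (x y : V → R) : R :=
  ∑ i, x i * y i - ∑ a, x (t a) * y (h a)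

def natZ (x : V → ℕ) : V → ℤ := fun i => (x i : ℤ)
def intQ (x : V → ℤ) : V → ℚ := fun i => (x i : ℚ)
def natQ (x : V → ℕ) : V → ℚ := fun i => (x i : ℚ)

/-- The weight `⟨α,·⟩`. -/
def weightL (t h : A → V) (α : V → ℤ) : V → ℤ :=
  fun i => eulerForm t h α (fun j => if j = i then 1 else 0)

/-- The weight `−⟨·,α⟩`. -/
def weightR (t h : A → V) (α : V → ℤ) : V → ℤ :=
  fun i => - eulerForm t h (fun j => if j = i then 1 else 0) α

/-- `IsPathFrom t h i p j` : the list of arrows `p` is a path from `i` to `j`. -/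
def IsPathFrom (t h : A → V) : V → List A → V → Prop
  | i, [], j => i = j
  | i, a :: p, j => t a = i ∧ IsPathFrom t h (h a) p j

/-- The quiver has no (nontrivial) oriented cycles. -/
def Acyclic (t h : A → V) : Prop := ∀ (i : V) (p : List A), IsPathFrom t h i p i → p = []

/-- The dimension vector `γ_i` of the projective indecomposable at `i`:
`γ_i(j)` is the number of paths from `i` to `j`. -/
def gammaRoot (t h : A → V) (i : V) : V → ℕ :=
  fun j => Set.ncard {p : List A | IsPathFrom t h i p j}

/-- A finite-dimensional representation of the quiver `(V, A, t, h)` over `K`. -/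
structure QuivRep (K : Type) [Field K] (V A : Type) (t h : A → V) : Type 1 where
  sp : V → Type
  [inst1 : ∀ i, AddCommGroup (sp i)]
  [inst2 : ∀ i, Module K (sp i)]
  [inst3 : ∀ i, FiniteDimensional K (sp i)]
  map : ∀ a : A, sp (t a) →ₗ[K] sp (h a)

attribute [instance] QuivRep.inst1 QuivRep.inst2 QuivRep.inst3

namespace QuivRep

variable {K} {t h : A → V}

/-- The dimension vector of a representation. -/
def dimVec (X : QuivRep K V A t h) : V → ℕ := fun i => Module.finrank K (X.sp i)

/-- A subrepresentation. -/
structure Sub (X : QuivRep K V A t h) where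
  sub : ∀ i, Submodule K (X.sp i)
  le : ∀ a : A, ∀ x ∈ sub (t a), X.map a x ∈ sub (h a)

/-- The dimension vector of a subrepresentation. -/
def Sub.dimVec {X : QuivRep K V A t h} (U : Sub X) : V → ℕ :=
  fun i => Module.finrank K (U.sub i)

/-- The space `Hom_Q(X,Y)` of morphisms of representations, as a submodule of
`Π i, Hom_K(X(i),Y(i))`. -/
def homS (X Y : QuivRep K V A t h) : Submodule K (∀ i, X.sp i →ₗ[K] Y.sp i) where
  carrier := {φ | ∀ a : A, (φ (h a)).comp (X.map a) = (Y.map a).comp (φ (t a))}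
  zero_mem' := by intro a; simp
  add_mem' := by
    intro f g hf hg a
    simp only [Pi.add_apply, LinearMap.add_comp, LinearMap.comp_add, hf a, hg a]
  smul_mem' := by
    intro c f hf a
    simp only [Pi.smul_apply, LinearMap.smul_comp, LinearMap.comp_smul, hf a]

/-- The dimension of `Hom_Q(X,Y)`. -/
def homDim (X Y : QuivRep K V A t h) : ℕ := Module.finrank K (homS X Y)

/-- The map `d^X_Y` from Ringel's canonical exact sequence. -/
def dmap (X Y : QuivRep K V A t h) :
    (∀ i, X.sp i →ₗ[K] Y.sp i) →ₗ[K] (∀ a : A, X.sp (t a) →ₗ[K] Y.sp (h a)) where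
  toFun φ := fun a => (φ (h a)).comp (X.map a) - (Y.map a).comp (φ (t a))
  map_add' f g := by
    funext a
    simp only [Pi.add_apply, LinearMap.add_comp, LinearMap.comp_add]
    abel
  map_smul' c f := by
    funext a
    simp only [Pi.smul_apply, LinearMap.smul_comp, LinearMap.comp_smul, smul_sub,
      RingHom.id_apply]

/-- The dimension of `Ext^1_Q(X,Y)`, i.e. of the cokernel of `d^X_Y`. -/
def extDim (X Y : QuivRep K V A t h) : ℕ :=
  Module.finrank K ((∀ a : A, X.sp (t a) →ₗ[K] Y.sp (h a)) ⧸ LinearMap.range (dmap X Y))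

/-- A rigid representation: `Ext^1_Q(X,X) = 0`. -/
def IsRigid (X : QuivRep K V A t h) : Prop := extDim X X = 0

/-- A Schur representation: `End_Q(X) = K·id`. -/
def IsSchur (X : QuivRep K V A t h) : Prop := homDim X X = 1

/-- An exceptional representation: rigid and Schur. -/
def IsExceptional (X : QuivRep K V A t h) : Prop := IsRigid X ∧ IsSchur X

end QuivRep

/-- `β` is a real Schur root: the dimension vector of an exceptional representation. -/
def isRealSchurRoot (t h : A → V) (β : V → ℕ) : Prop :=
  ∃ X : QuivRep K V A t h, X.dimVec = β ∧ X.IsExceptional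

/-- `ext_Q(α,β)` : the generic (minimal) value of `dim Ext^1_Q` on pairs of
representations of dimension vectors `α`, `β`. -/
def extMin (t h : A → V) (α β : V → ℕ) : ℕ :=
  sInf {n | ∃ X Y : QuivRep K V A t h, X.dimVec = α ∧ Y.dimVec = β ∧ QuivRep.extDim X Y = n}

/-- `hom_Q(α,β)` : the generic (minimal) value of `dim Hom_Q`. -/
def homMin (t h : A → V) (α β : V → ℕ) : ℕ :=
  sInf {n | ∃ X Y : QuivRep K V A t h, X.dimVec = α ∧ Y.dimVec = β ∧ QuivRep.homDim X Y = n}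

/-- `β' ↪ β` : every representation of dimension vector `β` has a subrepresentation of
dimension vector `β'`. -/
def Embeds (t h : A → V) (β' β : V → ℕ) : Prop :=
  ∀ X : QuivRep K V A t h, X.dimVec = β → ∃ U : QuivRep.Sub X, U.dimVec = β'

/-- `σ`-semi-stability of a representation. -/
def IsSemistable {t h : A → V} (σ : V → ℤ) (X : QuivRep K V A t h) : Prop :=
  (∑ i, σ i * (X.dimVec i : ℤ)) = 0 ∧
  ∀ U : QuivRep.Sub X, (∑ i, σ i * (U.dimVec i : ℤ)) ≤ 0

/-- `σ`-stability of a representation. -/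
def IsStable {t h : A → V} (σ : V → ℤ) (X : QuivRep K V A t h) : Prop :=
  (∑ i, σ i * (X.dimVec i : ℤ)) = 0 ∧ X.dimVec ≠ (fun _ => 0) ∧
  ∀ U : QuivRep.Sub X, U.dimVec ≠ (fun _ => 0) → U.dimVec ≠ X.dimVec →
    (∑ i, σ i * (U.dimVec i : ℤ)) < 0

/-- Isomorphism of representations. -/
def RepIso {t h : A → V} (X Y : QuivRep K V A t h) : Prop :=
  ∃ e : ∀ i, X.sp i ≃ₗ[K] Y.sp i,
    ∀ (a : A) (x : X.sp (t a)), e (h a) (X.map a x) = Y.map a (e (t a) x)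

/-- A quiver exceptional sequence of dimension vectors. -/
def IsQES (t h : A → V) {l : ℕ} (b : Fin l → V → ℕ) : Prop :=
  (∀ j, isRealSchurRoot K t h (b j)) ∧
  ∀ i j : Fin l, i < j →
    homMin K t h (b i) (b j) = 0 ∧ extMin K t h (b i) (b j) = 0 ∧
      eulerForm t h (natZ (b j)) (natZ (b i)) ≤ 0

/-- The cone of nonnegative rational linear combinations of a finite set of integral
vectors. -/
def coneOf (C : Finset (V → ℤ)) : Set (V → ℚ) :=
  {x | ∃ lam : (V → ℤ) → ℚ, (∀ c, 0 ≤ lam c) ∧ x = ∑ c ∈ C, lam c • intQ c}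

/-- A compatible subset of the set `Ψ(Q)_{≥ -1}` of almost positive real Schur roots. -/
def IsCompatible (t h : A → V) (C : Finset (V → ℤ)) : Prop :=
  (∀ x ∈ C, (∃ β : V → ℕ, isRealSchurRoot K t h β ∧ x = natZ β) ∨
      (∃ i : V, x = fun j => -(gammaRoot t h i j : ℤ))) ∧
  (∀ x ∈ C, ∀ y ∈ C, x ≠ y →
    (∀ β₁ β₂ : V → ℕ, isRealSchurRoot K t h β₁ → isRealSchurRoot K t h β₂ →
      x = natZ β₁ → y = natZ β₂ → extMin K t h β₁ β₂ = 0) ∧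
    (∀ (β : V → ℕ) (i : V), isRealSchurRoot K t h β →
      x = natZ β → y = (fun j => -(gammaRoot t h i j : ℤ)) → β i = 0))

/-- The domain of semi-invariants `D(β) ⊆ ℚ^{Q_0}`. -/
def Dom (t h : A → V) (β : V → ℕ) : Set (V → ℚ) :=
  {x | eulerForm t h x (natQ β) = 0 ∧
    ∀ β' : V → ℕ, Embeds K t h β' β → eulerForm t h x (natQ β') ≤ 0}

/-- A quiver exceptional set: a subset of `Ψ(Q)_{≥ -1}` of the form
`{β_1,…,β_l, −γ_{i_{l+1}},…,−γ_{i_m}}` with `β_j(i_k) = 0` and whose real-Schur-root part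
can be ordered into a quiver exceptional sequence. -/
def IsQExcSet (t h : A → V) (E : Finset (V → ℤ)) : Prop :=
  ∃ (l m : ℕ) (b : Fin l → V → ℕ) (g : Fin m → V),
    Function.Injective b ∧ Function.Injective g ∧ IsQES K t h b ∧
    (∀ j k, b j (g k) = 0) ∧
    (E : Set (V → ℤ)) =
      (Set.range fun j => natZ (b j)) ∪
      (Set.range fun k => (fun v => -(gammaRoot t h (g k) v : ℤ)))


/-- The underlying graph of the quiver is connected. -/
def IsConnectedQuiver (t h : A → V) : Prop :=
  ∀ i j : V,
    Relation.ReflTransGen (fun u v => ∃ a, (t a = u ∧ h a = v) ∨ (t a = v ∧ h a = u)) i j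

/-- Morphisms of representations. -/
structure RepHom {K : Type} [Field K] {V A : Type} {t h : A → V}
    (X Y : QuivRep K V A t h) : Type where
  app : ∀ i, X.sp i →ₗ[K] Y.sp i
  comm : ∀ a : A, (app (h a)).comp (X.map a) = (Y.map a).comp (app (t a))

namespace RepHom

variable {K₀ : Type} [Field K₀] {t h : A → V}

/-- The identity morphism. -/
def idHom (X : QuivRep K₀ V A t h) : RepHom X X :=
  ⟨fun _ => LinearMap.id, fun a => by ext x; simp⟩

/-- Composition of morphisms. -/
def comp {X Y Z : QuivRep K₀ V A t h} (f : RepHom X Y) (g : RepHom Y Z) : RepHom X Z :=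
  ⟨fun i => (g.app i).comp (f.app i), fun a => by
    ext x
    have hf := LinearMap.congr_fun (f.comm a) x
    have hg := LinearMap.congr_fun (g.comm a) (f.app (t a) x)
    simp only [LinearMap.comp_apply] at hf hg ⊢
    rw [hf, hg]⟩

/-- Sum of morphisms. -/
def add {X Y : QuivRep K₀ V A t h} (f g : RepHom X Y) : RepHom X Y :=
  ⟨fun i => f.app i + g.app i, fun a => by
    simp only [LinearMap.add_comp, LinearMap.comp_add, f.comm a, g.comm a]⟩

/-- Scalar multiple of a morphism. -/
def smul {X Y : QuivRep K₀ V A t h} (c : K₀) (f : RepHom X Y) : RepHom X Y :=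
  ⟨fun i => c • f.app i, fun a => by
    simp only [LinearMap.smul_comp, LinearMap.comp_smul, f.comm a]⟩

end RepHom

/-- The number of arrows `i → j` in the Ext-quiver `Q(𝓔)` of a sequence of dimension
vectors: `−⟨β_i, β_j⟩` for `i ≠ j`. -/
def extMult (t h : A → V) {l : ℕ} (b : Fin l → V → ℕ) (i j : Fin l) : ℕ :=
  if i = j then 0 else (-(eulerForm t h (natZ (b i)) (natZ (b j)))).toNat

/-- The arrow set of the Ext-quiver `Q(𝓔)`. -/
abbrev ExtArrow (t h : A → V) {l : ℕ} (b : Fin l → V → ℕ) : Type :=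
  (i : Fin l) × (j : Fin l) × Fin (extMult t h b i j)

/-- The representation space `rep(Q,β)` as a product of matrix spaces. -/
abbrev RepSpace (t h : A → V) (β : V → ℕ) : Type :=
  ∀ a : A, Matrix (Fin (β (h a))) (Fin (β (t a))) K

/-- The (base-change) action of `GL(β)` on `rep(Q,β)`. -/
def glAct (t h : A → V) {β : V → ℕ}
    (g : ∀ i, Matrix.GeneralLinearGroup (Fin (β i)) K) (W : RepSpace K t h β) :
    RepSpace K t h β :=
  fun a => (g (h a) : Matrix (Fin (β (h a))) (Fin (β (h a))) K) * W a *
    (((g (t a))⁻¹ : Matrix.GeneralLinearGroup (Fin (β (t a))) K) :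
      Matrix (Fin (β (t a))) (Fin (β (t a))) K)

/-- A polynomial function on `rep(Q,β)`. -/
def IsPolyFun (t h : A → V) {β : V → ℕ} (f : RepSpace K t h β → K) : Prop :=
  ∃ P : MvPolynomial ((a : A) × (Fin (β (h a)) × Fin (β (t a)))) K,
    ∀ W, f W = MvPolynomial.eval (fun x => W x.1 x.2.1 x.2.2) P

/-- The weight space `SI(Q,β)_σ` of semi-invariant polynomial functions of weight `σ`. -/
def SIweight (t h : A → V) (β : V → ℕ) (σ : V → ℤ) :
    Submodule K (RepSpace K t h β → K) where
  carrier := {f | IsPolyFun K t h f ∧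
    ∀ (g : ∀ i, Matrix.GeneralLinearGroup (Fin (β i)) K) (W : RepSpace K t h β),
      f (glAct K t h g W) =
        (((∏ i, (Matrix.GeneralLinearGroup.det (g i)) ^ σ i : Kˣ) : K)) * f W}
  zero_mem' := by
    refine ⟨⟨0, by simp⟩, by simp⟩
  add_mem' := by
    rintro f g ⟨⟨P, hP⟩, hf⟩ ⟨⟨Q, hQ⟩, hg⟩
    refine ⟨⟨P + Q, fun W => ?_⟩, fun gg W => ?_⟩
    · simp [hP W, hQ W]
    · simp only [Pi.add_apply, hf gg W, hg gg W]; ring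
  smul_mem' := by
    rintro c f ⟨⟨P, hP⟩, hf⟩
    refine ⟨⟨MvPolynomial.C c * P, fun W => ?_⟩, fun gg W => ?_⟩
    · simp [hP W]
    · simp only [Pi.smul_apply, hf gg W, smul_eq_mul]; ring

/-- Entry of a matrix accessed through natural-number indices. -/
def entryN {m n : ℕ} (M : Matrix (Fin m) (Fin n) K) (r c : ℕ) : K :=
  if hr : r < m then (if hc : c < n then M ⟨r, hr⟩ ⟨c, hc⟩ else 0) else 0

/-- The matrix of the map `d^V_W` (with `V` of dimension vector `α` varying and `W` of
dimension vector `w` fixed), in the standard bases. -/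
def schofieldMatrix (t h : A → V) {α w : V → ℕ}
    (Vm : RepSpace K t h α) (W : RepSpace K t h w) :
    Matrix ((a : A) × (Fin (w (h a)) × Fin (α (t a)))) ((i : V) × (Fin (w i) × Fin (α i))) K :=
  fun r c =>
    (if c.1 = h r.1 ∧ (c.2.1 : ℕ) = (r.2.1 : ℕ) then
      entryN K (Vm r.1) (c.2.2 : ℕ) (r.2.2 : ℕ) else 0)
    - (if c.1 = t r.1 ∧ (c.2.2 : ℕ) = (r.2.2 : ℕ) then
      entryN K (W r.1) (r.2.1 : ℕ) (c.2.1 : ℕ) else 0)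

/-- The Schofield semi-invariant `c_W : rep(Q,α) → K`, `V ↦ det d^V_W` (defined when
`⟨α, dim W⟩ = 0`, i.e. when `d^V_W` is a square matrix). -/
def schofieldSI (t h : A → V) {α w : V → ℕ} (W : RepSpace K t h w)
    (Vm : RepSpace K t h α) : K :=
  if hc : Fintype.card ((i : V) × (Fin (w i) × Fin (α i))) =
      Fintype.card ((a : A) × (Fin (w (h a)) × Fin (α (t a)))) then
    ((schofieldMatrix K t h Vm W).submatrix (Fintype.equivOfCardEq hc) id).det
  else 0

/-- The representation of `Q` attached to a point of `rep(Q,β)`. -/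
def toRep (t h : A → V) {β : V → ℕ} (W : RepSpace K t h β) : QuivRep K V A t h where
  sp i := Fin (β i) → K
  map a := Matrix.mulVecLin (W a)

namespace CE

set_option linter.unusedSectionVars false

open QuivRep

variable {K} {t h : A → V}

lemma mem_homS_iff (X Y : QuivRep K V A t h) (f : ∀ i, X.sp i →ₗ[K] Y.sp i) :
    f ∈ homS X Y ↔ ∀ (a : A) (x : X.sp (t a)), f (h a) (X.map a x) = Y.map a (f (t a) x) := by
  constructor
  · intro hf a x
    exact LinearMap.congr_fun (hf a) x
  · intro hf a
    ext x
    exact hf a x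

lemma schur_scalar (X : QuivRep K V A t h) (hX : X.IsSchur) (f : ∀ i, X.sp i →ₗ[K] X.sp i)
    (hf : f ∈ homS X X) : ∃ c : K, ∀ i x, f i x = c • x := by
  have h1 : Module.finrank K (homS X X) = 1 := hX
  have hid : (fun i => (LinearMap.id : X.sp i →ₗ[K] X.sp i)) ∈ homS X X := by
    rw [mem_homS_iff]; intro a x; rfl
  have hne : (⟨_, hid⟩ : homS X X) ≠ 0 := by
    intro h0
    have h0' : ∀ i (x : X.sp i), x = 0 := by
      intro i x
      have := congrArg (fun g : homS X X => g.1 i x) h0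
      simpa using this
    have : Subsingleton (homS X X) := by
      refine ⟨fun u v => ?_⟩
      ext i x
      rw [h0' i x]; simp
    rw [Module.finrank_zero_of_subsingleton] at h1
    omega
  obtain ⟨c, hc⟩ := (finrank_eq_one_iff_of_nonzero' _ hne).1 h1 ⟨f, hf⟩
  refine ⟨c, fun i x => ?_⟩
  have := congrArg (fun g : homS X X => g.1 i x) hc
  simpa using this.symm

lemma schur_ne (X : QuivRep K V A t h) (hX : X.IsSchur) : ∃ i, ∃ x : X.sp i, x ≠ 0 := by
  by_contra hcon
  push Not at hcon
  have h1 : Module.finrank K (homS X X) = 1 := hX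
  have : Subsingleton (homS X X) := by
    refine ⟨fun u v => ?_⟩
    ext i x
    rw [hcon i x]; simp
  rw [Module.finrank_zero_of_subsingleton] at h1
  omega

lemma exists_geninv {E F : Type} [AddCommGroup E] [Module K E] [AddCommGroup F] [Module K F]
    (f : E →ₗ[K] F) : ∃ s : F →ₗ[K] E, ∀ x, f (s (f x)) = f x := by
  obtain ⟨g, hg⟩ := f.rangeRestrict.exists_rightInverse_of_surjective f.range_rangeRestrict
  obtain ⟨p, hp⟩ := (LinearMap.range f).subtype.exists_leftInverse_of_injective
    (Submodule.ker_subtype _)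
  refine ⟨g.comp p, fun x => ?_⟩
  have h1 : p (f x) = f.rangeRestrict x := LinearMap.congr_fun hp (f.rangeRestrict x)
  have h2 := congrArg Subtype.val (LinearMap.congr_fun hg (f.rangeRestrict x))
  simpa [h1] using h2

/-- The Happel-Ringel lemma. -/
lemma happelRingel (X Y : QuivRep K V A t h) (hX : X.IsSchur) (hY : Y.IsSchur)
    (hE : Function.Surjective (dmap Y X)) (f : ∀ i, X.sp i →ₗ[K] Y.sp i) (hf : f ∈ homS X Y)
    (hne : f ≠ 0) : (∀ i, Function.Injective (f i)) ∨ (∀ i, Function.Surjective (f i)) := by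
  rw [mem_homS_iff] at hf
  choose s hs using fun i => exists_geninv (f i)
  obtain ⟨φ, hφ⟩ := hE (fun a => (s (h a)).comp
    (((f (h a)).comp (s (h a))).comp (Y.map a) - (Y.map a).comp ((f (t a)).comp (s (t a)))))
  have hφ' : ∀ a (y : Y.sp (t a)), φ (h a) (Y.map a y) - X.map a (φ (t a) y)
      = s (h a) (f (h a) (s (h a) (Y.map a y)) - Y.map a (f (t a) (s (t a) y))) := by
    intro a y
    exact LinearMap.congr_fun (congrFun hφ a) y
  have e1 : (fun i => (f i).comp (φ i) - (f i).comp (s i)) ∈ homS Y Y := by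
    rw [mem_homS_iff]
    intro a y
    have h1 := congrArg (f (h a)) (hφ' a y)
    simp only [map_sub, hs, ← hf] at h1
    simp only [LinearMap.sub_apply, LinearMap.comp_apply, map_sub, ← hf]
    rw [sub_eq_iff_eq_add] at h1
    rw [h1]; abel
  have e2 : (fun i => (φ i).comp (f i)) ∈ homS X X := by
    rw [mem_homS_iff]
    intro a x
    have h1 := hφ' a (f (t a) x)
    simp only [hs, ← hf, sub_self, map_zero] at h1
    simp only [LinearMap.comp_apply]
    exact sub_eq_zero.1 h1
  obtain ⟨l, hl⟩ := schur_scalar Y hY _ e1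
  obtain ⟨m, hm⟩ := schur_scalar X hX _ e2
  simp only [LinearMap.sub_apply, LinearMap.comp_apply] at hl hm
  by_cases hl0 : l = 0
  · left
    have hm0 : m ≠ 0 := by
      intro hm0
      apply hne
      funext i
      ext x
      have h1 := hl i (f i x)
      rw [hm, hs, hl0, hm0] at h1
      simpa using h1
    intro i x y hxy
    have h1 := hm i x
    rw [hxy, hm i y] at h1
    exact (smul_right_injective _ hm0 h1).symm
  · right
    intro i y
    refine ⟨l⁻¹ • (φ i y - s i y), ?_⟩
    rw [map_smul, map_sub, hl, smul_smul, inv_mul_cancel₀ hl0, one_smul]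

lemma extDim_eq_zero (X Y : QuivRep K V A t h) :
    extDim X Y = 0 ↔ Function.Surjective (dmap X Y) := by
  unfold extDim
  rw [Module.finrank_eq_zero_iff_of_free, ← LinearMap.range_eq_top]
  exact Submodule.Quotient.subsingleton_iff

lemma ker_dmap (X Y : QuivRep K V A t h) : LinearMap.ker (dmap X Y) = homS X Y := by
  ext f
  rw [LinearMap.mem_ker]
  constructor
  · intro hf a
    exact sub_eq_zero.1 (congrFun hf a)
  · intro hf
    funext a
    exact sub_eq_zero.2 (hf a)

lemma euler (X Y : QuivRep K V A t h) :
    (homDim X Y : ℤ) - extDim X Y = eulerForm t h (natZ X.dimVec) (natZ Y.dimVec) := by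
  have h1 := LinearMap.finrank_range_add_finrank_ker (dmap X Y)
  have h2 := Submodule.finrank_quotient_add_finrank (LinearMap.range (dmap X Y))
  rw [ker_dmap] at h1
  rw [Module.finrank_pi_fintype] at h1 h2
  simp only [Module.finrank_linearMap] at h1 h2
  unfold homDim extDim eulerForm natZ dimVec
  have h1' := congrArg (Nat.cast : ℕ → ℤ) h1
  have h2' := congrArg (Nat.cast : ℕ → ℤ) h2
  push_cast at h1' h2'
  linarith

/-- Transport of Ext-vanishing along isomorphisms. -/
lemma surj_of_iso {X X' Y Y' : QuivRep K V A t h} (hX : RepIso K X X') (hY : RepIso K Y Y')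
    (hs : Function.Surjective (dmap X Y)) : Function.Surjective (dmap X' Y') := by
  obtain ⟨e, he⟩ := hX
  obtain ⟨g, hg⟩ := hY
  intro ψ
  obtain ⟨φ, hφ⟩ := hs (fun a => ((g (h a)).symm.toLinearMap.comp (ψ a)).comp
    (e (t a)).toLinearMap)
  refine ⟨fun i => ((g i).toLinearMap.comp (φ i)).comp (e i).symm.toLinearMap, ?_⟩
  funext a
  ext x
  have h1 := LinearMap.congr_fun (congrFun hφ a) ((e (t a)).symm x)
  have h2 := congrArg (g (h a)) h1
  have h3 : (e (h a)).symm (X'.map a x) = X.map a ((e (t a)).symm x) := by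
    rw [LinearEquiv.symm_apply_eq, he]; simp
  simp only [dmap, LinearMap.coe_mk, AddHom.coe_mk, LinearMap.sub_apply, LinearMap.comp_apply,
    LinearEquiv.coe_coe, map_sub, LinearEquiv.apply_symm_apply, hg] at h2
  simp only [dmap, LinearMap.coe_mk, AddHom.coe_mk, LinearMap.sub_apply, LinearMap.comp_apply,
    LinearEquiv.coe_coe, h3]
  exact h2

lemma finite_bad {E F : Type} [AddCommGroup E] [Module K E] [AddCommGroup F] [Module K F]
    [FiniteDimensional K F] (D N : E →ₗ[K] F) (hD : Function.Surjective D) :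
    {s : K | ¬ Function.Surjective (D + s • N)}.Finite := by
  obtain ⟨R, hR⟩ := D.exists_rightInverse_of_surjective (LinearMap.range_eq_top.2 hD)
  let b := Module.finBasis K F
  let M := LinearMap.toMatrix b b (N.comp R)
  let p : Polynomial K := (1 + (Polynomial.X : Polynomial K) • M.map Polynomial.C).det
  have hp : ∀ s, p.eval s = LinearMap.det (LinearMap.id + s • N.comp R) := by
    intro s
    rw [← LinearMap.det_toMatrix b, ← Polynomial.coe_evalRingHom, RingHom.map_det]
    congr 1
    ext i j
    simp [M, Matrix.one_apply, LinearMap.toMatrix_id]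
    split_ifs <;> simp [mul_comm]
  have hp0 : p ≠ 0 := by
    intro h0
    have := hp 0
    rw [h0] at this
    simp at this
  refine (p.rootSet_finite K).subset ?_
  intro s hs
  rw [Polynomial.mem_rootSet]
  refine ⟨hp0, ?_⟩
  by_contra hne
  apply hs
  have hne' : LinearMap.det (LinearMap.id + s • N.comp R) ≠ 0 := by
    rw [← hp]; simpa using hne
  have hcomp : (D + s • N).comp R = LinearMap.id + s • N.comp R := by
    rw [LinearMap.add_comp, hR, LinearMap.smul_comp]
  have hu : Function.Surjective ((D + s • N).comp R) := by
    rw [hcomp]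
    exact (LinearEquiv.ofIsUnitDet (f := LinearMap.id + s • N.comp R) (v := b) (v' := b)
      (by rw [LinearMap.det_toMatrix]; exact isUnit_iff_ne_zero.2 hne')).surjective
  intro y
  obtain ⟨x, hx⟩ := hu y
  exact ⟨R x, hx⟩

/-- A representation on the same spaces. -/
def withMap (X : QuivRep K V A t h) (m : ∀ a, X.sp (t a) →ₗ[K] X.sp (h a)) :
    QuivRep K V A t h where
  sp := X.sp
  map := m

def lineRep (X : QuivRep K V A t h) (m : ∀ a, X.sp (t a) →ₗ[K] X.sp (h a)) (s : K) :
    QuivRep K V A t h := withMap X (fun a => X.map a + s • (m a - X.map a))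

lemma exists_withMap (X X' : QuivRep K V A t h) (hd : X'.dimVec = X.dimVec) :
    ∃ m, RepIso K X' (withMap X m) := by
  have e : ∀ i, X'.sp i ≃ₗ[K] X.sp i := fun i => LinearEquiv.ofFinrankEq _ _ (congrFun hd i)
  refine ⟨fun a => ((e (h a)).toLinearMap.comp (X'.map a)).comp (e (t a)).symm.toLinearMap,
    e, fun a x => ?_⟩
  change _ = e (h a) (X'.map a ((e (t a)).symm (e (t a) x)))
  rw [LinearEquiv.symm_apply_apply]
  rfl

lemma repIso_refl (X : QuivRep K V A t h) : RepIso K X X :=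
  ⟨fun _ => LinearEquiv.refl _ _, fun _ _ => rfl⟩

lemma repIso_of_bij (X Y : QuivRep K V A t h) (f : ∀ i, X.sp i →ₗ[K] Y.sp i)
    (hf : f ∈ homS X Y) (hb : ∀ i, Function.Bijective (f i)) : RepIso K X Y :=
  ⟨fun i => LinearEquiv.ofBijective (f i) (hb i), (mem_homS_iff X Y f).1 hf⟩

lemma exists_nonzero_hom (X Y : QuivRep K V A t h) (hp : homDim X Y ≠ 0) :
    ∃ f ∈ homS X Y, f ≠ 0 := by
  by_contra hcon
  push Not at hcon
  apply hp
  unfold homDim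
  have : homS X Y = ⊥ := (Submodule.eq_bot_iff _).2 hcon
  rw [this, finrank_bot]

lemma bij_of_dim (X Y : QuivRep K V A t h) (hd : X.dimVec = Y.dimVec)
    (f : ∀ i, X.sp i →ₗ[K] Y.sp i)
    (hf : (∀ i, Function.Injective (f i)) ∨ (∀ i, Function.Surjective (f i))) (i : V) :
    Function.Bijective (f i) := by
  have hdi : Module.finrank K (X.sp i) = Module.finrank K (Y.sp i) := congrFun hd i
  have := LinearMap.injective_iff_surjective_of_finrank_eq_finrank (f := f i) hdi
  rcases hf with hf | hf
  · exact ⟨hf i, this.1 (hf i)⟩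
  · exact ⟨this.2 (hf i), hf i⟩

/-- A representation without extensions with respect to an exceptional one of the same
dimension vector is isomorphic to it. -/
lemma iso_of_ext (X Z : QuivRep K V A t h) (hX : X.IsExceptional) (hd : Z.dimVec = X.dimVec)
    (h1 : Function.Surjective (dmap Z X)) (h2 : Function.Surjective (dmap X Z))
    (h3 : Function.Surjective (dmap Z Z)) : RepIso K Z X := by
  have e0 := euler X X
  have e1 := euler Z X
  have e3 := euler Z Z
  rw [(extDim_eq_zero _ _).2 h1] at e1
  rw [(extDim_eq_zero _ _).2 h3] at e3
  have r0 : extDim X X = 0 := hX.1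
  have s0 : homDim X X = 1 := hX.2
  rw [r0, s0] at e0
  rw [hd] at e1 e3
  have hZ : Z.IsSchur := by
    show homDim Z Z = 1
    omega
  obtain ⟨f, hf, hne⟩ := exists_nonzero_hom Z X (by omega)
  exact repIso_of_bij Z X f hf (bij_of_dim Z X hd f (happelRingel Z X hZ hX.2 h2 f hf hne))

/-- The map `dmap` for representations on the spaces of `X` and `Y`. -/
def rawD (X Y : QuivRep K V A t h) (m : ∀ a, X.sp (t a) →ₗ[K] X.sp (h a))
    (n : ∀ a, Y.sp (t a) →ₗ[K] Y.sp (h a)) :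
    (∀ i, X.sp i →ₗ[K] Y.sp i) →ₗ[K] (∀ a : A, X.sp (t a) →ₗ[K] Y.sp (h a)) :=
  dmap (withMap X m) (withMap Y n)

lemma rawD_apply (X Y : QuivRep K V A t h) (m n) (φ : ∀ i, X.sp i →ₗ[K] Y.sp i) (a : A)
    (x : X.sp (t a)) : rawD X Y m n φ a x = φ (h a) (m a x) - n a (φ (t a) x) := rfl

lemma rawD_line (X Y : QuivRep K V A t h) (m n m' n') (s : K) :
    rawD X Y (fun a => m a + s • (m' a - m a)) (fun a => n a + s • (n' a - n a)) =
      rawD X Y m n + s • (rawD X Y m' n' - rawD X Y m n) := by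
  refine LinearMap.ext fun φ => funext fun a => LinearMap.ext fun x => ?_
  simp only [rawD_apply, LinearMap.add_apply, LinearMap.smul_apply, LinearMap.sub_apply,
    Pi.add_apply, Pi.smul_apply, Pi.sub_apply, map_add, map_smul, map_sub]
  module

lemma bad_line (X Y : QuivRep K V A t h) (m n) (hs : Function.Surjective (dmap X Y)) :
    {s : K | ¬ Function.Surjective (dmap (lineRep X m s) (lineRep Y n s))}.Finite := by
  have := finite_bad (rawD X Y X.map Y.map) (rawD X Y m n - rawD X Y X.map Y.map) hs
  refine this.subset fun s hs' => ?_
  simp only [Set.mem_ofPred_eq] at hs' ⊢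
  rw [← rawD_line]
  exact hs'

lemma bad_line' (X Y : QuivRep K V A t h) (m n)
    (hs : Function.Surjective (dmap (withMap X m) (withMap Y n))) :
    {s : K | ¬ Function.Surjective (dmap (lineRep X m s) (lineRep Y n s))}.Finite := by
  have := finite_bad (rawD X Y m n) (rawD X Y X.map Y.map - rawD X Y m n) hs
  refine (this.preimage (f := fun s => 1 - s) (fun a _ b _ hab => by simpa using hab)).subset
    fun s hs' => ?_
  simp only [Set.mem_ofPred_eq, Set.mem_preimage] at hs' ⊢
  have e : rawD X Y m n + (1 - s) • (rawD X Y X.map Y.map - rawD X Y m n) =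
      rawD X Y X.map Y.map + s • (rawD X Y m n - rawD X Y X.map Y.map) := by module
  rw [e, ← rawD_line]
  exact hs'

lemma lineRep_const (X : QuivRep K V A t h) (s : K) : lineRep X X.map s = X := by
  cases X
  simp [lineRep, withMap]

lemma bad_iso (X : QuivRep K V A t h) (hX : X.IsExceptional) (m) :
    {s : K | ¬ RepIso K (lineRep X m s) X}.Finite := by
  have hs := (extDim_eq_zero _ _).1 hX.1
  have b1 := bad_line X X m m hs
  have b2 := bad_line X X m X.map hs
  have b3 := bad_line X X X.map m hs
  refine ((b1.union b2).union b3).subset fun s hbad => ?_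
  by_contra hcon
  simp only [Set.mem_union, Set.mem_ofPred_eq, not_or, not_not] at hcon
  rw [lineRep_const] at hcon
  exact hbad (iso_of_ext X _ hX rfl hcon.1.2 hcon.2 hcon.1.1)

lemma ext_of_extMin [Infinite K] (X Y : QuivRep K V A t h) (hX : X.IsExceptional)
    (hY : Y.IsExceptional) (hm : extMin K t h X.dimVec Y.dimVec = 0) :
    Function.Surjective (dmap X Y) := by
  have hmem := Nat.sInf_mem (s := {n | ∃ X' Y' : QuivRep K V A t h, X'.dimVec = X.dimVec ∧
    Y'.dimVec = Y.dimVec ∧ QuivRep.extDim X' Y' = n}) ⟨_, X, Y, rfl, rfl, rfl⟩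
  obtain ⟨X', Y', hX', hY', he⟩ := hmem
  have he' : extDim X' Y' = 0 := he.trans hm
  obtain ⟨m, im⟩ := exists_withMap X X' hX'
  obtain ⟨n, jn⟩ := exists_withMap Y Y' hY'
  have hs := surj_of_iso im jn ((extDim_eq_zero _ _).1 he')
  have hfin := ((bad_iso X hX m).union (bad_iso Y hY n)).union (bad_line' X Y m n hs)
  obtain ⟨s, hgood⟩ := hfin.exists_notMem
  simp only [Set.mem_union, Set.mem_ofPred_eq, not_or, not_not] at hgood
  exact surj_of_iso hgood.1.1 hgood.1.2 hgood.2

lemma le_of_inj (X Y : QuivRep K V A t h) (f : ∀ i, X.sp i →ₗ[K] Y.sp i)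
    (hf : ∀ i, Function.Injective (f i)) (i : V) : X.dimVec i ≤ Y.dimVec i :=
  LinearMap.finrank_le_finrank_of_injective (hf i)

lemma le_of_surj (X Y : QuivRep K V A t h) (f : ∀ i, X.sp i →ₗ[K] Y.sp i)
    (hf : ∀ i, Function.Surjective (f i)) (i : V) : Y.dimVec i ≤ X.dimVec i :=
  LinearMap.finrank_le_finrank_of_surjective (hf i)

lemma sum_lt {x y : V → ℕ} (hle : ∀ i, x i ≤ y i) (hne : x ≠ y) : ∑ i, x i < ∑ i, y i := by
  obtain ⟨i, hi⟩ := Function.ne_iff.1 hne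
  exact Finset.sum_lt_sum (fun i _ => hle i) ⟨i, Finset.mem_univ _, lt_of_le_of_ne (hle i) hi⟩

/-- In a finite nonempty family of pairwise Ext-orthogonal exceptional representations with
distinct dimension vectors there is one receiving no nonzero map from the others. -/
lemma exists_source {ι : Type} (S : Finset ι) (hS : S.Nonempty)
    (X : ι → QuivRep K V A t h)
    (hX : ∀ i ∈ S, (X i).IsSchur)
    (hE : ∀ i ∈ S, ∀ j ∈ S, Function.Surjective (dmap (X i) (X j)))
    (hd : ∀ i ∈ S, ∀ j ∈ S, i ≠ j → (X i).dimVec ≠ (X j).dimVec) :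
    ∃ i ∈ S, ∀ j ∈ S, j ≠ i → homDim (X j) (X i) = 0 := by
  classical
  let M := S.filter (fun i => ∃ j ∈ S, j ≠ i ∧ ∃ f ∈ homS (X i) (X j),
    ∀ k, Function.Injective (f k))
  by_cases hM : M.Nonempty
  · obtain ⟨i, hi, hmin⟩ := M.exists_min_image (fun i => ∑ k, (X i).dimVec k) hM
    obtain ⟨hiS, l, hlS, hli, g, hg, hginj⟩ := Finset.mem_filter.1 hi
    refine ⟨i, hiS, fun j hj hji => ?_⟩
    by_contra hne
    obtain ⟨f, hf, hf0⟩ := exists_nonzero_hom _ _ hne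
    rcases happelRingel _ _ (hX j hj) (hX i hiS) (hE i hiS j hj) f hf hf0 with hinj | hsurj
    · have h1 := hmin j (Finset.mem_filter.2 ⟨hj, i, hiS, hji.symm, f, hf, hinj⟩)
      have h2 := sum_lt (le_of_inj _ _ f hinj) (hd j hj i hiS hji)
      omega
    · have hc : (fun k => (g k).comp (f k)) ∈ homS (X j) (X l) := by
        rw [mem_homS_iff] at hf hg ⊢
        intro a x
        simp only [LinearMap.comp_apply, hf, hg]
      have hc0 : (fun k => (g k).comp (f k)) ≠ 0 := by
        intro h0
        obtain ⟨k, y, hy⟩ := schur_ne _ (hX i hiS)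
        obtain ⟨x, rfl⟩ := hsurj k y
        apply hy
        apply hginj k
        have := LinearMap.congr_fun (congrFun h0 k) x
        simpa using this
      rcases happelRingel _ _ (hX j hj) (hX l hlS) (hE l hlS j hj) _ hc hc0 with hi' | hs'
      · refine hd j hj i hiS hji (funext fun k => le_antisymm ?_ (le_of_surj _ _ f hsurj k))
        exact le_of_inj _ _ f (fun k => Function.Injective.of_comp (hi' k)) k
      · refine hd l hlS i hiS hli (funext fun k => le_antisymm ?_ (le_of_inj _ _ g hginj k))
        exact le_of_surj _ _ g (fun k => Function.Surjective.of_comp (hs' k)) k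
  · obtain ⟨i, hiS, hmax⟩ := S.exists_max_image (fun i => ∑ k, (X i).dimVec k) hS
    refine ⟨i, hiS, fun j hj hji => ?_⟩
    by_contra hne
    obtain ⟨f, hf, hf0⟩ := exists_nonzero_hom _ _ hne
    rcases happelRingel _ _ (hX j hj) (hX i hiS) (hE i hiS j hj) f hf hf0 with hinj | hsurj
    · exact hM ⟨j, Finset.mem_filter.2 ⟨hj, i, hiS, hji.symm, f, hf, hinj⟩⟩
    · have h1 := hmax j hj
      have h2 := sum_lt (le_of_surj _ _ f hsurj) (hd i hiS j hj hji.symm)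
      omega

lemma path_append {i j k : V} {p q : List A} (hp : IsPathFrom t h i p j)
    (hq : IsPathFrom t h j q k) : IsPathFrom t h i (p ++ q) k := by
  induction p generalizing i with
  | nil => cases hp; exact hq
  | cons a p ih => exact ⟨hp.1, ih hp.2⟩

lemma gamma_self (hQ : Acyclic t h) (i : V) : gammaRoot t h i i = 1 := by
  unfold gammaRoot
  rw [Set.ncard_eq_one]
  refine ⟨[], Set.eq_singleton_iff_unique_mem.2 ⟨rfl, fun p hp => hQ i p hp⟩⟩

lemma exists_path {i j : V} (hg : gammaRoot t h i j ≠ 0) : ∃ p, IsPathFrom t h i p j := by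
  by_contra hcon
  push Not at hcon
  apply hg
  unfold gammaRoot
  have : {p : List A | IsPathFrom t h i p j} = ∅ := Set.eq_empty_iff_forall_notMem.2 hcon
  rw [this, Set.ncard_empty]

/-- A nonempty finite set of vertices contains one not reachable from the others. -/
lemma exists_source_vertex (hQ : Acyclic t h) (S : Finset V) (hS : S.Nonempty) :
    ∃ i ∈ S, ∀ j ∈ S, j ≠ i → gammaRoot t h j i = 0 := by
  classical
  obtain ⟨i, hi, hmin⟩ := S.exists_min_image
    (fun i => (Finset.univ.filter (fun j => ∃ p, IsPathFrom t h j p i)).card) hS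
  refine ⟨i, hi, fun j hj hji => ?_⟩
  by_contra hg
  obtain ⟨p, hp⟩ := exists_path hg
  have := hmin j hj
  refine absurd (Finset.card_lt_card ?_) (not_lt.2 this)
  rw [Finset.ssubset_iff_of_subset]
  · refine ⟨i, by simpa using ⟨[], rfl⟩, ?_⟩
    simp only [Finset.mem_filter, Finset.mem_univ, true_and]
    rintro ⟨q, hq⟩
    have h1 := hQ i _ (path_append hq hp)
    simp only [List.append_eq_nil_iff] at h1
    rw [h1.1] at hq
    exact hji hq.symm
  · intro k hk
    simp only [Finset.mem_filter, Finset.mem_univ, true_and] at hk ⊢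
    obtain ⟨q, hq⟩ := hk
    exact ⟨_, path_append hq hp⟩

lemma euler_sum {ι : Type} [Fintype ι] (c : ι → V → ℤ) (g : ι → ℚ)
    (hg : ∑ k, g k • intQ (c k) = 0) (y : V → ℤ) :
    ∑ k, g k * ((eulerForm t h (c k) y : ℤ) : ℚ) = 0 := by
  have hg' : ∀ i, ∑ k, g k * (c k i : ℚ) = 0 := by
    intro i
    have := congrFun hg i
    simpa [intQ] using this
  have h1 : ∑ k, g k * ((eulerForm t h (c k) y : ℤ) : ℚ)
      = ∑ i, (∑ k, g k * (c k i : ℚ)) * (y i : ℚ)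
        - ∑ a, (∑ k, g k * (c k (t a) : ℚ)) * (y (h a) : ℚ) := by
    simp only [eulerForm, Finset.sum_mul]
    rw [Finset.sum_comm, Finset.sum_comm (s := (Finset.univ : Finset A)),
      ← Finset.sum_sub_distrib]
    refine Finset.sum_congr rfl fun k _ => ?_
    push_cast
    rw [mul_sub, Finset.mul_sum, Finset.mul_sum]
    simp only [mul_assoc]
  rw [h1]
  simp [hg']

lemma natZ_inj {x y : V → ℕ} (hxy : natZ x = natZ y) : x = y := by
  funext i
  have := congrFun hxy i
  simpa [natZ] using this

/-- The zero representation. -/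
def zeroRep (K : Type) [Field K] (t h : A → V) : QuivRep K V A t h where
  sp _ := PUnit
  map _ := 0

lemma indep [Infinite K] (hQ : Acyclic t h) (C : Finset (V → ℤ)) (hC : IsCompatible K t h C)
    (g : {x // x ∈ C} → ℚ) (hg : ∑ c, g c • intQ c.val = 0) : ∀ c, g c = 0 := by
  classical
  obtain ⟨hC1, hC2⟩ := hC
  -- the negative elements have zero coefficient
  have hneg : ∀ c : {x // x ∈ C}, (∃ i : V, c.val = fun j => -(gammaRoot t h i j : ℤ)) →
      g c = 0 := by
    by_contra hcon
    push Not at hcon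
    let S : Finset V := Finset.univ.filter (fun i => ∃ c : {x // x ∈ C}, g c ≠ 0 ∧
      c.val = fun j => -(gammaRoot t h i j : ℤ))
    have hS : S.Nonempty := by
      obtain ⟨c, ⟨i, hi⟩, hc⟩ := hcon
      exact ⟨i, by simp only [S, Finset.mem_filter, Finset.mem_univ, true_and]; exact ⟨c, hc, hi⟩⟩
    obtain ⟨i, hi, hsrc⟩ := exists_source_vertex hQ S hS
    obtain ⟨-, c₀, hc₀, hci⟩ := Finset.mem_filter.1 hi
    have h1 : ∑ c, g c * (c.val i : ℚ) = 0 := by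
      have := congrFun hg i
      simpa [intQ] using this
    rw [Finset.sum_eq_single c₀] at h1
    · rw [hci] at h1
      simp only [gamma_self hQ] at h1
      apply hc₀
      simpa using h1
    · intro c _ hcc
      by_cases hc0 : g c = 0
      · rw [hc0, zero_mul]
      · rcases hC1 c.val c.2 with ⟨β, hβ, hcβ⟩ | ⟨k, hk⟩
        · have := (hC2 c.val c.2 c₀.val c₀.2 (fun e => hcc (Subtype.ext e))).2 β i hβ hcβ hci
          rw [hcβ]
          simp [natZ, this]
        · have hkS : k ∈ S := by
            simp only [S, Finset.mem_filter, Finset.mem_univ, true_and]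
            exact ⟨c, hc0, hk⟩
          have hki : k ≠ i := by
            rintro rfl
            exact hcc (Subtype.ext (hk.trans hci.symm))
          rw [hk]
          simp [hsrc k hkS hki]
    · intro hn
      exact absurd (Finset.mem_univ _) hn
  by_contra hcon
  push Not at hcon
  have hex : ∀ c : {x // x ∈ C}, ∃ X : QuivRep K V A t h, g c ≠ 0 →
      X.IsExceptional ∧ c.val = natZ X.dimVec := by
    intro c
    by_cases hc0 : g c = 0
    · exact ⟨zeroRep K t h, fun hn => absurd hc0 hn⟩
    · rcases hC1 c.val c.2 with ⟨β, ⟨X, hXβ, hXe⟩, hcβ⟩ | hk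
      · exact ⟨X, fun _ => ⟨hXe, by rw [hXβ]; exact hcβ⟩⟩
      · exact absurd (hneg c hk) hc0
  choose X hX using hex
  let S : Finset {x // x ∈ C} := Finset.univ.filter (fun c => g c ≠ 0)
  have hmem : ∀ c ∈ S, g c ≠ 0 := fun c hc => (Finset.mem_filter.1 hc).2
  have hE : ∀ i ∈ S, ∀ j ∈ S, Function.Surjective (dmap (X i) (X j)) := by
    intro i hi j hj
    obtain ⟨hie, hid⟩ := hX i (hmem i hi)
    obtain ⟨hje, hjd⟩ := hX j (hmem j hj)
    by_cases hij : i = j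
    · subst hij
      exact (extDim_eq_zero _ _).1 hie.1
    · apply ext_of_extMin _ _ hie hje
      exact (hC2 i.val i.2 j.val j.2 (fun e => hij (Subtype.ext e))).1 _ _
        ⟨_, rfl, hie⟩ ⟨_, rfl, hje⟩ hid hjd
  obtain ⟨i, hi, hsrc⟩ := exists_source S
    (by obtain ⟨c, hc⟩ := hcon; exact ⟨c, Finset.mem_filter.2 ⟨Finset.mem_univ _, hc⟩⟩) X
    (fun i hi => (hX i (hmem i hi)).1.2) hE
    (by
      intro i hi j hj hij hd
      apply hij
      apply Subtype.ext
      rw [(hX i (hmem i hi)).2, (hX j (hmem j hj)).2, hd])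
  obtain ⟨hie, hid⟩ := hX i (hmem i hi)
  have h1 := euler_sum (t := t) (h := h) (fun c : {x // x ∈ C} => c.val) g hg i.val
  rw [Finset.sum_eq_single i] at h1
  · have h2 := euler (X i) (X i)
    have r0 : extDim (X i) (X i) = 0 := hie.1
    have s0 : homDim (X i) (X i) = 1 := hie.2
    rw [r0, s0, ← hid] at h2
    rw [← h2] at h1
    apply hmem i hi
    simpa using h1
  · intro j _ hji
    by_cases hj0 : g j = 0
    · rw [hj0, zero_mul]
    · have hjS : j ∈ S := Finset.mem_filter.2 ⟨Finset.mem_univ _, hj0⟩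
      have h2 := euler (X j) (X i)
      rw [(extDim_eq_zero _ _).2 (hE j hjS i hi), hsrc j hjS hji, ← hid, ← (hX j hj0).2] at h2
      rw [← h2]
      simp
  · intro hn
    exact absurd (Finset.mem_univ _) hn

end CE

/-- Every compatible subset of `Ψ(Q)_{≥ −1}` is linearly independent
over `ℚ`; in particular it has at most `|Q_0|` elements. -/
theorem stmt9 [IsAlgClosed K] [CharZero K] (t h : A → V) (hQ : Acyclic t h)
    (C : Finset (V → ℤ)) (hC : IsCompatible K t h C) :
    LinearIndependent ℚ (fun c : {x // x ∈ C} => intQ c.val) ∧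
    C.card ≤ Fintype.card V := by
  have : Infinite K := CharZero.infinite K
  have hli : LinearIndependent ℚ (fun c : {x // x ∈ C} => intQ c.val) :=
    Fintype.linearIndependent_iff.2 (fun g hg => CE.indep hQ C hC g hg)
  refine ⟨hli, ?_⟩
  have := hli.fintype_card_le_finrank
  simpa using this

end
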